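/- Let R be a unital non-associative ring, σ : R → R an additive surjection with σ(1) = 1, and δ : R → R an additive map with δ(1) = 0. If R is right Noetherian, then the non-associative Ore extension R[X;σ,δ] is right Noetherian. -/

import Mathlib

/-! Hilbert's basis argument works here without associativity. For a right ideal `I` of
`R[X;σ,δ]` let `leadSet I m` be the set of coefficients at `X^m` of elements of `I` of degree at
most `m`.

* If `p` has degree at most `m` and coefficient `r` at `X^m`, then `p · s` has degree at most `m`
  and coefficient `r * σ^m(s)` there (`oreMul_const_apply_top`). As `σ` is surjective, `leadSet I m`
  is a right ideal of `R` (`leadSet_isRightIdealSet`).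
* As `σ 1 = 1` and `δ 1 = 0`, right multiplication by `X` shifts the coefficients
  (`oreMul_X`), so `leadSet I m ⊆ leadSet I (m + 1)`.
* Right ideals `I ⊆ I'` with `leadSet I m = leadSet I' m` for all `m` are equal, by
  subtracting leading terms (`subset_of_leadSet`).

For a chain `f`, the diagonal `leadSet (f k) k` is stationary from some `N` on, which makes
`leadSet (f n) m` constant for `m, n ≥ N`; for the finitely many `m < N` the chain
`leadSet (f n) m` is stationary in `n` separately. -/

/-- A left ideal of a (possibly non-associative, non-unital) multiplication `mul` on an
additive group `S`: an additive subgroup closed under left multiplication by arbitrary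
elements of `S`. -/
def IsLeftIdealSet {S : Type*} [AddCommGroup S] (mul : S → S → S) (I : Set S) : Prop :=
  (0 : S) ∈ I ∧ (∀ a ∈ I, ∀ b ∈ I, a + b ∈ I) ∧ (∀ a ∈ I, -a ∈ I) ∧
    ∀ s : S, ∀ a ∈ I, mul s a ∈ I

/-- A right ideal of a (possibly non-associative, non-unital) multiplication `mul` on an
additive group `S`: an additive subgroup closed under right multiplication by arbitrary
elements of `S`. -/
def IsRightIdealSet {S : Type*} [AddCommGroup S] (mul : S → S → S) (I : Set S) : Prop :=
  (0 : S) ∈ I ∧ (∀ a ∈ I, ∀ b ∈ I, a + b ∈ I) ∧ (∀ a ∈ I, -a ∈ I) ∧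
    ∀ s : S, ∀ a ∈ I, mul a s ∈ I

/-- Left Noetherian: the ascending chain condition on left ideals. -/
def LeftNoetherianMul {S : Type*} [AddCommGroup S] (mul : S → S → S) : Prop :=
  ∀ f : ℕ → Set S, (∀ n, IsLeftIdealSet mul (f n)) → (∀ n, f n ⊆ f (n + 1)) →
    ∃ N, ∀ m, N ≤ m → f m = f N

/-- Right Noetherian: the ascending chain condition on right ideals. -/
def RightNoetherianMul {S : Type*} [AddCommGroup S] (mul : S → S → S) : Prop :=
  ∀ f : ℕ → Set S, (∀ n, IsRightIdealSet mul (f n)) → (∀ n, f n ⊆ f (n + 1)) →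
    ∃ N, ∀ m, N ≤ m → f m = f N

/-- `piMap σ δ m i` is the map `π_i^m`, the sum of all `(m choose i)` possible
compositions of `i` copies of `σ` and `m − i` copies of `δ`; it is `0` when `m < i`. -/
def piMap {R : Type*} [NonAssocRing R] (σ δ : R → R) : ℕ → ℕ → R → R
  | 0, 0 => id
  | 0, _ + 1 => fun _ => 0
  | m + 1, 0 => fun r => δ (piMap σ δ m 0 r)
  | m + 1, i + 1 => fun r => σ (piMap σ δ m i r) + δ (piMap σ δ m (i + 1) r)

/-- The multiplication of the non-associative Ore extension `R[X;σ,δ]`, on the additive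
group `ℕ →₀ R` of polynomials `Σ rᵢ Xⁱ`:
`(r X^m)(s X^n) = Σᵢ (r π_i^m(s)) X^{i+n}` (the terms with `i > m` vanish). -/
noncomputable def oreMul {R : Type*} [NonAssocRing R] (σ δ : R → R)
    (p q : ℕ →₀ R) : ℕ →₀ R :=
  p.sum fun m r => q.sum fun n s =>
    ∑ i ∈ Finset.range (m + 1), Finsupp.single (i + n) (r * piMap σ δ m i s)

section
variable {R : Type*} [NonAssocRing R] {σ δ : R → R}

theorem piMap_zero_right (hσ0 : σ 0 = 0) (hδ0 : δ 0 = 0) (m i : ℕ) : piMap σ δ m i 0 = 0 := by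
  induction m generalizing i with
  | zero => cases i <;> simp [piMap]
  | succ m ih => cases i <;> simp [piMap, ih, hσ0, hδ0]

theorem piMap_of_lt (hσ0 : σ 0 = 0) (hδ0 : δ 0 = 0) {m i : ℕ} (h : m < i) (s : R) :
    piMap σ δ m i s = 0 := by
  induction m generalizing i with
  | zero => obtain ⟨j, rfl⟩ := Nat.exists_eq_succ_of_ne_zero h.ne'; simp [piMap]
  | succ m ih =>
    obtain ⟨j, rfl⟩ := Nat.exists_eq_succ_of_ne_zero (Nat.ne_of_gt (Nat.zero_lt_of_lt h))
    simp [piMap, ih (show m < j by omega), ih (show m < j + 1 by omega), hσ0, hδ0]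

theorem piMap_self (hσ0 : σ 0 = 0) (hδ0 : δ 0 = 0) (m : ℕ) (s : R) :
    piMap σ δ m m s = σ^[m] s := by
  induction m with
  | zero => simp [piMap]
  | succ m ih =>
    simp [piMap, ih, piMap_of_lt hσ0 hδ0 (Nat.lt_succ_self m), hδ0, Function.iterate_succ_apply',
      -Function.iterate_succ]

theorem piMap_one (hσ0 : σ 0 = 0) (hδ0 : δ 0 = 0) (hσ1 : σ 1 = 1) (hδ1 : δ 1 = 0) (m i : ℕ) :
    piMap σ δ m i 1 = if i = m then 1 else 0 := by
  induction m generalizing i with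
  | zero => cases i <;> simp [piMap]
  | succ m ih =>
    cases i with
    | zero =>
      change δ (piMap σ δ m 0 1) = _
      rw [ih, if_neg (Nat.succ_ne_zero m).symm]
      split_ifs <;> assumption
    | succ i =>
      by_cases h : i = m <;> by_cases h' : i + 1 = m <;>
        simp [piMap, ih, h, h', hσ0, hσ1, hδ0, hδ1]

theorem oreMul_single (hσ0 : σ 0 = 0) (hδ0 : δ 0 = 0) (p : ℕ →₀ R) (n : ℕ) (s : R) :
    oreMul σ δ p (Finsupp.single n s) = p.sum fun m r =>
      ∑ i ∈ Finset.range (m + 1), Finsupp.single (i + n) (r * piMap σ δ m i s) := by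
  unfold oreMul
  refine Finsupp.sum_congr fun m _ => ?_
  rw [Finsupp.sum_single_index]
  simp [piMap_zero_right hσ0 hδ0]

theorem oreMul_const_apply (hσ0 : σ 0 = 0) (hδ0 : δ 0 = 0) (p : ℕ →₀ R) (s : R) (k : ℕ) :
    oreMul σ δ p (Finsupp.single 0 s) k = p.sum fun m r => r * piMap σ δ m k s := by
  rw [oreMul_single hσ0 hδ0, Finsupp.sum_apply]
  refine Finsupp.sum_congr fun m _ => ?_
  simp only [Finsupp.finsetSum_apply, add_zero, Finsupp.single_apply, Finset.sum_ite_eq',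
    Finset.mem_range]
  split_ifs with h
  · rfl
  · rw [piMap_of_lt hσ0 hδ0 (by omega), mul_zero]

theorem oreMul_const_apply_of_gt (hσ0 : σ 0 = 0) (hδ0 : δ 0 = 0) {p : ℕ →₀ R} {m : ℕ}
    (hp : ∀ i, m < i → p i = 0) (s : R) {k : ℕ} (hk : m < k) :
    oreMul σ δ p (Finsupp.single 0 s) k = 0 := by
  rw [oreMul_const_apply hσ0 hδ0]
  refine Finset.sum_eq_zero fun a _ => ?_
  rcases lt_or_ge m a with h | h
  · simp [hp a h]
  · simp [piMap_of_lt hσ0 hδ0 (h.trans_lt hk)]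

theorem oreMul_const_apply_top (hσ0 : σ 0 = 0) (hδ0 : δ 0 = 0) {p : ℕ →₀ R} {m : ℕ}
    (hp : ∀ i, m < i → p i = 0) (s : R) :
    oreMul σ δ p (Finsupp.single 0 s) m = p m * σ^[m] s := by
  rw [oreMul_const_apply hσ0 hδ0, Finsupp.sum, Finset.sum_eq_single m, piMap_self hσ0 hδ0]
  · intro a _ ha
    rcases lt_or_gt_of_ne ha with h | h
    · rw [piMap_of_lt hσ0 hδ0 h, mul_zero]
    · simp [hp a h]
  · intro h
    simp [Finsupp.notMem_support_iff.mp h]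

theorem oreMul_X (hσ0 : σ 0 = 0) (hδ0 : δ 0 = 0) (hσ1 : σ 1 = 1) (hδ1 : δ 1 = 0) (p : ℕ →₀ R) :
    oreMul σ δ p (Finsupp.single 1 1) = p.mapDomain (· + 1) := by
  rw [oreMul_single hσ0 hδ0, Finsupp.mapDomain]
  refine Finsupp.sum_congr fun m _ => ?_
  rw [Finset.sum_eq_single m]
  · simp [piMap_one hσ0 hδ0 hσ1 hδ1]
  · intro i _ hi
    simp [piMap_one hσ0 hδ0 hσ1 hδ1, hi]
  · simp

/-- The coefficients at `X^m` of those elements of `I` that have degree at most `m`: the leading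
coefficients of the elements of degree exactly `m`, together with `0` when `0 ∈ I`. -/
def leadSet (I : Set (ℕ →₀ R)) (m : ℕ) : Set R :=
  {r | ∃ p ∈ I, (∀ i, m < i → p i = 0) ∧ p m = r}

theorem leadSet_mono {I I' : Set (ℕ →₀ R)} (h : I ⊆ I') (m : ℕ) : leadSet I m ⊆ leadSet I' m :=
  fun _ ⟨p, hp, h1, h2⟩ => ⟨p, h hp, h1, h2⟩

theorem leadSet_isRightIdealSet (hσ0 : σ 0 = 0) (hδ0 : δ 0 = 0) (hσsurj : Function.Surjective σ)
    {I : Set (ℕ →₀ R)} (hI : IsRightIdealSet (oreMul σ δ) I) (m : ℕ) :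
    IsRightIdealSet (fun a b : R => a * b) (leadSet I m) := by
  obtain ⟨h0, hadd, hneg, hmul⟩ := hI
  refine ⟨⟨0, h0, by simp, by simp⟩, ?_, ?_, ?_⟩
  · rintro _ ⟨p, hp, hp', rfl⟩ _ ⟨q, hq, hq', rfl⟩
    exact ⟨p + q, hadd p hp q hq, fun i hi => by simp [hp' i hi, hq' i hi], by simp⟩
  · rintro _ ⟨p, hp, hp', rfl⟩
    exact ⟨-p, hneg p hp, fun i hi => by simp [hp' i hi], by simp⟩
  · rintro s _ ⟨p, hp, hp', rfl⟩
    obtain ⟨t, rfl⟩ := hσsurj.iterate m s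
    exact ⟨_, hmul (Finsupp.single 0 t) p hp,
      fun i hi => oreMul_const_apply_of_gt hσ0 hδ0 hp' t hi,
      oreMul_const_apply_top hσ0 hδ0 hp' t⟩

theorem leadSet_subset_succ (hσ0 : σ 0 = 0) (hδ0 : δ 0 = 0) (hσ1 : σ 1 = 1) (hδ1 : δ 1 = 0)
    {I : Set (ℕ →₀ R)} (hI : IsRightIdealSet (oreMul σ δ) I) (m : ℕ) :
    leadSet I m ⊆ leadSet I (m + 1) := by
  rintro _ ⟨p, hp, hp', rfl⟩
  have key : ∀ k, oreMul σ δ p (Finsupp.single 1 1) (k + 1) = p k := fun k => by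
    rw [oreMul_X hσ0 hδ0 hσ1 hδ1]
    exact Finsupp.mapDomain_apply (add_left_injective 1) p k
  refine ⟨_, hI.2.2.2 (Finsupp.single 1 1) p hp, fun i hi => ?_, key m⟩
  obtain ⟨j, rfl⟩ := Nat.exists_eq_succ_of_ne_zero (show i ≠ 0 by omega)
  exact (key j).trans (hp' j (by omega))

theorem subset_of_leadSet {I I' : Set (ℕ →₀ R)} (hI : IsRightIdealSet (oreMul σ δ) I)
    (hI' : IsRightIdealSet (oreMul σ δ) I') (h : I ⊆ I')
    (hlead : ∀ m, leadSet I' m ⊆ leadSet I m) : I' ⊆ I := by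
  have key : ∀ d : ℕ, ∀ p ∈ I', (∀ i, d ≤ i → p i = 0) → p ∈ I := by
    intro d
    induction d with
    | zero =>
      intro p _ hp
      rw [show p = 0 from Finsupp.ext fun i => hp i (Nat.zero_le i)]
      exact hI.1
    | succ d ih =>
      intro p hpI hp
      obtain ⟨q, hq, hq', hqd⟩ := hlead d ⟨p, hpI, fun i hi => hp i hi, rfl⟩
      have hmem : p + -q ∈ I := by
        refine ih _ (hI'.2.1 p hpI _ (hI'.2.2.1 q (h hq))) fun i hi => ?_
        rcases hi.eq_or_lt with rfl | hi
        · simp [hqd]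
        · simp [hp i hi, hq' i hi]
      simpa using hI.2.1 _ hmem q hq
  intro p hp
  refine key (p.support.sup id + 1) p hp fun i hi => ?_
  by_contra hne
  have : i ≤ p.support.sup id := Finset.le_sup (f := id) (Finsupp.mem_support_iff.mpr hne)
  omega

end

/-- **Hilbert's basis theorem, right version, for non-associative Ore extensions.**
If `R` is a unital non-associative ring, `σ` an additive surjection of `R` with
`σ 1 = 1`, `δ` an additive map with `δ 1 = 0`, and `R` is right Noetherian, then
`R[X;σ,δ]` is right Noetherian. -/
theorem ore_rightNoetherian {R : Type*} [NonAssocRing R] (σ δ : R → R)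
    (hσadd : ∀ a b : R, σ (a + b) = σ a + σ b) (hσsurj : Function.Surjective σ)
    (hσ1 : σ 1 = 1) (hδadd : ∀ a b : R, δ (a + b) = δ a + δ b) (hδ1 : δ 1 = 0)
    (hR : RightNoetherianMul (fun a b : R => a * b)) :
    RightNoetherianMul (oreMul σ δ) := by
  intro f hf hsub
  have hσ0 : σ 0 = 0 := by simpa using hσadd 0 0
  have hδ0 : δ 0 = 0 := by simpa using hδadd 0 0
  have hmono : Monotone f := monotone_nat_of_le_succ hsub
  have hdeg : ∀ n, Monotone (leadSet (f n)) := fun n =>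
    monotone_nat_of_le_succ (leadSet_subset_succ hσ0 hδ0 hσ1 hδ1 (hf n))
  have hideal := fun n m => leadSet_isRightIdealSet hσ0 hδ0 hσsurj (hf n) m
  obtain ⟨N, hN⟩ := hR (fun k => leadSet (f k) k) (fun k => hideal k k)
    (fun k => (leadSet_mono (hsub k) k).trans (hdeg (k + 1) (Nat.le_succ k)))
  have hrow : ∀ m, ∃ M, ∀ n, M ≤ n → leadSet (f n) m = leadSet (f M) m := fun m =>
    hR (fun n => leadSet (f n) m) (fun n => hideal n m) (fun n => leadSet_mono (hsub n) m)
  choose M hM using hrow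
  set K := max N ((Finset.range N).sup M) with hK
  refine ⟨K, fun n hn => (subset_of_leadSet (hf K) (hf n) (hmono hn) fun m => ?_).antisymm
    (hmono hn)⟩
  rcases lt_or_ge m N with hm | hm
  · have hMK : M m ≤ K :=
      (Finset.le_sup (f := M) (Finset.mem_range.mpr hm)).trans (le_max_right _ _)
    rw [hM m n (hMK.trans hn), hM m K hMK]
  · have hNK : N ≤ K := le_max_left _ _
    -- `leadSet (f n) m` is bounded by the diagonal set at `max n m`, which is the one at `N`.
    calc leadSet (f n) m
        ⊆ leadSet (f (max n m)) m := leadSet_mono (hmono (le_max_left _ _)) m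
      _ ⊆ leadSet (f (max n m)) (max n m) := hdeg _ (le_max_right _ _)
      _ = leadSet (f N) N := hN _ (hm.trans (le_max_right _ _))
      _ ⊆ leadSet (f K) N := leadSet_mono (hmono hNK) N
      _ ⊆ leadSet (f K) m := hdeg K hm
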